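/- Let S = (S, I, O, G, D, h) be a weakly-complete deterministic TFSM with output delays all of whose guards are half-open intervals [u,v) with integers 0 ≤ u < v. If a timed input sequence α = (i_1,t_1)…(i_n,t_n) is a homing sequence for S, then its untimed projection [α]_{I_G} is a homing sequence for the region FSM R(S). -/

import Mathlib

/-!
A timed run and an abstract run step in parallel. Every boundary point of the guards labeled `i`
lies outside the interior of each refined guard, so a refined guard meeting `tr.guard` is contained
in it (`guardSub_of_mem`). Hence, once a projection `β` of `α` is fixed, the timed runs of `α` and the
runs of `β` in the region FSM correspond, with the same end states and with output sequence the
`(output, delay)` pairs of the transitions (`fRunTo_of_tRunTo`, `exists_tRunTo_of_fRunTo`). These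
pairs and the timestamps of `α` determine the timed outputs, so equal abstract outputs give equal
sets of timed outputs (`timedOut_subset`), and the common end state provided by the homing property
of `α` is also reached in the region FSM.

The projection exists because `α` is executable from every state (apply the homing property to
a pair of equal states), and a time in some guard labeled `i` has finitely many boundary points
around it, a largest one below and a smallest one above (`exists_refined`).
-/


/-- A timed guard: an interval with natural-number endpoints, left-closed, and
either right-open (`rightClosed = false`, i.e. `[lo, hi)`) or right-closed
(`rightClosed = true`, i.e. `[lo, hi]`; point intervals are `[u,u]`). -/
structure Guard where
  lo : ℕ
  hi : ℕ
  rightClosed : Bool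
deriving DecidableEq

/-- Membership of a timestamp in a guard. -/
def GuardMem (g : Guard) (t : ℝ) : Prop :=
  (g.lo : ℝ) ≤ t ∧ (if g.rightClosed then t ≤ (g.hi : ℝ) else t < (g.hi : ℝ))

/-- Guard inclusion (as sets of timestamps). -/
def GuardSub (g g' : Guard) : Prop := ∀ t : ℝ, GuardMem g t → GuardMem g' t

/-- A transition of a TFSM with output delays: source state, input, timed guard,
output, positive integer output delay, destination state. -/
structure TTrans (S I O : Type) where
  src : S
  inp : I
  guard : Guard
  out : O
  delay : ℕ+
  dst : S

/-- A TFSM with output delays over states `S`, inputs `I`, outputs `O`,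
given by its transition relation. -/
abbrev TFSM (S I O : Type) := Set (TTrans S I O)

variable {S I O A B : Type}

/-- Determinism: any two distinct transitions from the same state on the same input
have disjoint guards. -/
def TFSMDeterministic (M : TFSM S I O) : Prop :=
  ∀ tr ∈ M, ∀ tr' ∈ M, tr.src = tr'.src → tr.inp = tr'.inp → tr ≠ tr' →
    ∀ t : ℝ, ¬ (GuardMem tr.guard t ∧ GuardMem tr'.guard t)

/-- A timed input sequence: nonnegative, nondecreasing timestamps. -/
def IsTimedInputSeq (α : List (I × ℝ)) : Prop :=
  (∀ p ∈ α, 0 ≤ p.2) ∧ List.Chain' (· ≤ ·) (α.map Prod.snd)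

/-- `TRunTo M s t0 α trs sf`: starting at state `s` at time `t0`, the timed input
sequence `α` induces the sequence of transitions `trs`, ending at state `sf`. -/
inductive TRunTo (M : TFSM S I O) : S → ℝ → List (I × ℝ) → List (TTrans S I O) → S → Prop
  | nil (s : S) (t0 : ℝ) : TRunTo M s t0 [] [] s
  | cons {s sf : S} {t0 t : ℝ} {i : I} {tr : TTrans S I O}
      {rest : List (I × ℝ)} {trs : List (TTrans S I O)} :
      tr ∈ M → tr.src = s → tr.inp = i → GuardMem tr.guard (t - t0) →
      TRunTo M tr.dst t rest trs sf →
      TRunTo M s t0 ((i, t) :: rest) (tr :: trs) sf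

/-- `α` induces the sequence of transitions `trs` from state `s`. -/
def TInduces (M : TFSM S I O) (s : S) (α : List (I × ℝ)) (trs : List (TTrans S I O)) : Prop :=
  ∃ sf : S, TRunTo M s 0 α trs sf

/-- `Dom(s)`: the timed input sequences inducing at least one sequence of transitions from `s`. -/
def TDom (M : TFSM S I O) (s : S) : Set (List (I × ℝ)) :=
  { α | IsTimedInputSeq α ∧ ∃ trs, TInduces M s α trs }

/-- `next_state(s, α) = sf` (as a relation, since `next_state` is partial). -/
def TReaches (M : TFSM S I O) (s : S) (α : List (I × ℝ)) (sf : S) : Prop :=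
  ∃ trs, TRunTo M s 0 α trs sf

/-- The timed outputs of a run: the `j`-th transition produces its output at time
`t_j + d_j`. -/
def rawOutputs (α : List (I × ℝ)) (trs : List (TTrans S I O)) : List (O × ℝ) :=
  List.zipWith (fun p tr => (tr.out, p.2 + ((tr.delay : ℕ) : ℝ))) α trs

/-- `timed_out(s, α)`: all time-sorted reorderings of the timed outputs of the run of `α` at `s`. -/
def timedOut (M : TFSM S I O) (s : S) (α : List (I × ℝ)) : Set (List (O × ℝ)) :=
  { β | ∃ trs sf, TRunTo M s 0 α trs sf ∧ List.Perm β (rawOutputs α trs) ∧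
        List.Chain' (· ≤ ·) (β.map Prod.snd) }

/-- Homing sequence for a TFSM with output delays. -/
def THoming (M : TFSM S I O) (α : List (I × ℝ)) : Prop :=
  IsTimedInputSeq α ∧ ∀ s1 s2 : S, timedOut M s1 α = timedOut M s2 α →
    ∃ sf : S, TReaches M s1 α sf ∧ TReaches M s2 α sf

/-- Synchronizing sequence for a TFSM with output delays. -/
def TSync (M : TFSM S I O) (α : List (I × ℝ)) : Prop :=
  IsTimedInputSeq α ∧ ∃ sf : S, ∀ s : S, TReaches M s α sf

/-- A timed input sequence is non-integer if the difference of any two distinct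
timestamps is not an integer. -/
def NonInteger (α : List (I × ℝ)) : Prop :=
  ∀ j k : Fin α.length, j ≠ k → ∀ z : ℤ, (α.get j).2 - (α.get k).2 ≠ (z : ℝ)

/-- A transition of an (untimed) FSM. -/
structure FTrans (S A B : Type) where
  src : S
  inp : A
  out : B
  dst : S

/-- An (untimed) FSM given by its transition relation. -/
abbrev UntimedFSM (S A B : Type) := Set (FTrans S A B)

/-- FSM run: input sequence, produced output sequence, final state. -/
inductive FRunTo (T : UntimedFSM S A B) : S → List A → List B → S → Prop
  | nil (s : S) : FRunTo T s [] [] s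
  | cons {s sf : S} {a : A} {rest : List A} {γ : List B} {f : FTrans S A B} :
      f ∈ T → f.src = s → f.inp = a → FRunTo T f.dst rest γ sf →
      FRunTo T s (a :: rest) (f.out :: γ) sf

def FReaches (T : UntimedFSM S A B) (s : S) (β : List A) (sf : S) : Prop :=
  ∃ γ, FRunTo T s β γ sf

/-- `out(s, β)` for an FSM (a set, i.e. a partial value, since the FSM may be partial). -/
def FOut (T : UntimedFSM S A B) (s : S) (β : List A) : Set (List B) :=
  { γ | ∃ sf, FRunTo T s β γ sf }

def FDeterministic (T : UntimedFSM S A B) : Prop :=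
  ∀ f ∈ T, ∀ f' ∈ T, f.src = f'.src → f.inp = f'.inp → f = f'

/-- Completeness of an FSM relative to an input alphabet `A0`. -/
def FCompleteOn (T : UntimedFSM S A B) (A0 : Set A) : Prop :=
  ∀ s : S, ∀ a ∈ A0, ∃ f ∈ T, f.src = s ∧ f.inp = a

/-- Synchronizing sequence for an FSM. -/
def FSync (T : UntimedFSM S A B) (β : List A) : Prop :=
  ∃ sf : S, ∀ s : S, FReaches T s β sf

/-- Homing sequence for an FSM. -/
def FHoming (T : UntimedFSM S A B) (β : List A) : Prop :=
  ∀ s1 s2 : S, FOut T s1 β = FOut T s2 β →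
    ∃ sf : S, FReaches T s1 β sf ∧ FReaches T s2 β sf

/-- The guards appearing on transitions labeled with input `i`. -/
def guardsOf (M : TFSM S I O) (i : I) : Set Guard :=
  { g | ∃ tr ∈ M, tr.inp = i ∧ tr.guard = g }

/-- Boundary points of the guards labeled `i`. -/
def boundaries (M : TFSM S I O) (i : I) : Set ℕ :=
  { p | ∃ g ∈ guardsOf M i, g.lo = p ∨ g.hi = p }

/-- `Ḡ_i`: the half-open intervals determined by consecutive boundary points of `G_i`. -/
def refinedGuards (M : TFSM S I O) (i : I) : Set Guard :=
  { g | g.rightClosed = false ∧ g.lo ∈ boundaries M i ∧ g.hi ∈ boundaries M i ∧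
        g.lo < g.hi ∧ ∀ r ∈ boundaries M i, ¬ (g.lo < r ∧ r < g.hi) }

/-- The abstract input alphabet `I_G = {(i, g) : g ∈ Ḡ_i}`. -/
def absInputs (M : TFSM S I O) : Set (I × Guard) :=
  { p | p.2 ∈ refinedGuards M p.1 }

/-- The region FSM `R(S)` of a TFSM with output delays. -/
def regionFSM (M : TFSM S I O) : UntimedFSM S (I × Guard) (O × ℕ+) :=
  { f | f.inp ∈ absInputs M ∧ ∃ tr ∈ M, tr.src = f.src ∧ tr.inp = f.inp.1 ∧
        tr.out = f.out.1 ∧ tr.delay = f.out.2 ∧ tr.dst = f.dst ∧ GuardSub f.inp.2 tr.guard }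

/-- All guards are half-open intervals `[u, v)` with `u < v`. -/
def HalfOpenGuards (M : TFSM S I O) : Prop :=
  ∀ tr ∈ M, tr.guard.rightClosed = false ∧ tr.guard.lo < tr.guard.hi

/-- Weak completeness: all states have the same domain. -/
def WeaklyComplete (M : TFSM S I O) : Prop :=
  ∀ s s' : S, TDom M s = TDom M s'

/-- `Projects M t0 α β`: `β` is the untimed projection `[α]_{I_G}` of `α`
(relative to previous timestamp `t0`). -/
inductive Projects (M : TFSM S I O) : ℝ → List (I × ℝ) → List (I × Guard) → Prop
  | nil (t0 : ℝ) : Projects M t0 [] []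
  | cons {t0 t : ℝ} {i : I} {g : Guard} {rest : List (I × ℝ)} {brest : List (I × Guard)} :
      g ∈ refinedGuards M i → GuardMem g (t - t0) →
      Projects M t rest brest →
      Projects M t0 ((i, t) :: rest) ((i, g) :: brest)

/-- All guards are point intervals `[u, u]` with `u` a positive integer. -/
def PointIntervals (M : TFSM S I O) : Prop :=
  ∀ tr ∈ M, tr.guard.rightClosed = true ∧ tr.guard.lo = tr.guard.hi ∧ 0 < tr.guard.lo

/-- The region FSM of a TFSM with only point intervals: abstract inputs are the
(input, guard) pairs appearing on transitions. -/
def pointRegionFSM (M : TFSM S I O) : UntimedFSM S (I × Guard) (O × ℕ+) :=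
  { f | ∃ tr ∈ M, tr.src = f.src ∧ (tr.inp, tr.guard) = f.inp ∧
        (tr.out, tr.delay) = f.out ∧ tr.dst = f.dst }

/-- `t(α)`: the last timestamp of `α` (0 for the empty sequence). -/
def tEnd (α : List (I × ℝ)) : ℝ := (α.map Prod.snd).getLastD 0

/-- The number of timed outputs of the run produced at or after time `t(α)`
(counted with multiplicity). -/
noncomputable def tailCount (α : List (I × ℝ)) (trs : List (TTrans S I O)) : ℕ :=
  ((rawOutputs α trs).filter (fun p => decide (tEnd α ≤ p.2))).length

/-- The timed output tail of a run: the multiset of `(o, τ - t(α))` over timed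
outputs `(o, τ)` of the run with `τ ≥ t(α)`. -/
noncomputable def tailOf (α : List (I × ℝ)) (trs : List (TTrans S I O)) : Multiset (O × ℝ) :=
  ↑(((rawOutputs α trs).filter (fun p => decide (tEnd α ≤ p.2))).map
      (fun p => (p.1, p.2 - tEnd α)))

/-- The set of all timed output tails of the TFSM, together with the empty tail. -/
def Tout (M : TFSM S I O) : Set (Multiset (O × ℝ)) :=
  insert 0 { m | ∃ (s : S) (α : List (I × ℝ)) (trs : List (TTrans S I O)) (sf : S),
    α ∈ TDom M s ∧ TRunTo M s 0 α trs sf ∧ m = tailOf α trs }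

/-- The output delay at state `j` of the machine `B_n`. -/
def BnDelay (n : ℕ) (j : Fin n) : ℕ+ :=
  if (j : ℕ) = n - 2 then 3 else if (j : ℕ) = n - 1 then 1 else 2

/-- The transition of `B_n` out of state `j`. -/
def BnTrans (n : ℕ) [NeZero n] (j : Fin n) : TTrans (Fin n) Unit Unit :=
  ⟨j, (), ⟨1, 1, true⟩, (), BnDelay n j, j + 1⟩

/-- The TFSM `B_n` with only point intervals. -/
def Bn (n : ℕ) [NeZero n] : TFSM (Fin n) Unit Unit := Set.range (BnTrans n)

lemma finite_boundaries (M : TFSM S I O) (hfin : Set.Finite M) (i : I) :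
    (boundaries M i).Finite := by
  refine ((hfin.image fun tr => tr.guard.lo).union (hfin.image fun tr => tr.guard.hi)).subset ?_
  rintro p ⟨g, ⟨tr, htr, -, rfl⟩, h | h⟩
  · exact Or.inl ⟨tr, htr, h⟩
  · exact Or.inr ⟨tr, htr, h⟩

lemma guardMem_iff {g : Guard} (h : g.rightClosed = false) (t : ℝ) :
    GuardMem g t ↔ (g.lo : ℝ) ≤ t ∧ t < (g.hi : ℝ) := by
  simp [GuardMem, h]

lemma exists_refined (M : TFSM S I O) (hfin : Set.Finite M) (hho : HalfOpenGuards M)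
    {tr : TTrans S I O} (htr : tr ∈ M) {t : ℝ} (ht : GuardMem tr.guard t) :
    ∃ g ∈ refinedGuards M tr.inp, GuardMem g t := by
  rw [guardMem_iff (hho tr htr).1] at ht
  have hB := finite_boundaries M hfin tr.inp
  obtain ⟨a, ⟨haB, hat⟩, ha⟩ := Set.exists_max_image
    {p ∈ boundaries M tr.inp | (p : ℝ) ≤ t} id (hB.subset fun _ h => h.1)
    ⟨tr.guard.lo, ⟨tr.guard, ⟨tr, htr, rfl, rfl⟩, Or.inl rfl⟩, ht.1⟩
  obtain ⟨b, ⟨hbB, hbt⟩, hb⟩ := Set.exists_min_image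
    {p ∈ boundaries M tr.inp | t < (p : ℝ)} id (hB.subset fun _ h => h.1)
    ⟨tr.guard.hi, ⟨tr.guard, ⟨tr, htr, rfl, rfl⟩, Or.inr rfl⟩, ht.2⟩
  refine ⟨⟨a, b, false⟩, ⟨rfl, haB, hbB, ?_, ?_⟩, (guardMem_iff rfl t).2 ⟨hat, hbt⟩⟩
  · exact_mod_cast hat.trans_lt hbt
  · rintro r hr ⟨h1, h2⟩
    rcases le_or_gt (r : ℝ) t with h | h
    · exact absurd (ha r ⟨hr, h⟩) (not_le.2 h1)
    · exact absurd (hb r ⟨hr, h⟩) (not_le.2 h2)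

lemma exists_projects (M : TFSM S I O) (hfin : Set.Finite M) (hho : HalfOpenGuards M)
    {s sf : S} {t0 : ℝ} {α : List (I × ℝ)} {trs : List (TTrans S I O)}
    (h : TRunTo M s t0 α trs sf) : ∃ β, Projects M t0 α β := by
  induction h with
  | nil s t0 => exact ⟨[], .nil _⟩
  | cons htr _ hi hg _ ih =>
    obtain ⟨β, hβ⟩ := ih
    obtain ⟨g, hgr, hgm⟩ := exists_refined M hfin hho htr hg
    subst hi
    exact ⟨_, .cons hgr hgm hβ⟩

/-- A refined guard sharing a time with the guard of a transition is contained in that guard. -/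
lemma guardSub_of_mem (M : TFSM S I O) (hho : HalfOpenGuards M)
    {tr : TTrans S I O} (htr : tr ∈ M) {g : Guard} (hg : g ∈ refinedGuards M tr.inp)
    {t : ℝ} (ht : GuardMem tr.guard t) (hgt : GuardMem g t) : GuardSub g tr.guard := by
  obtain ⟨hrc, -, -, -, hbd⟩ := hg
  rw [guardMem_iff (hho tr htr).1] at ht
  rw [guardMem_iff hrc] at hgt
  have h1 := hbd tr.guard.lo ⟨tr.guard, ⟨tr, htr, rfl, rfl⟩, Or.inl rfl⟩
  have h2 := hbd tr.guard.hi ⟨tr.guard, ⟨tr, htr, rfl, rfl⟩, Or.inr rfl⟩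
  have h3 : tr.guard.lo < g.hi := by exact_mod_cast ht.1.trans_lt hgt.2
  have h4 : g.lo < tr.guard.hi := by exact_mod_cast hgt.1.trans_lt ht.2
  have h5 : (tr.guard.lo : ℝ) ≤ g.lo := by
    exact_mod_cast not_lt.1 fun h => h1 ⟨h, h3⟩
  have h6 : (g.hi : ℝ) ≤ tr.guard.hi := by
    exact_mod_cast not_lt.1 fun h => h2 ⟨h4, h⟩
  intro u hu
  rw [guardMem_iff hrc] at hu
  exact (guardMem_iff (hho tr htr).1 u).2 ⟨h5.trans hu.1, hu.2.trans_le h6⟩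

/-- The abstract output sequence of a sequence of transitions: its `(output, delay)` pairs. -/
def absOut (trs : List (TTrans S I O)) : List (O × ℕ+) := trs.map fun tr => (tr.out, tr.delay)

lemma fRunTo_of_tRunTo (M : TFSM S I O) (hho : HalfOpenGuards M)
    {s sf : S} {t0 : ℝ} {α : List (I × ℝ)} {trs : List (TTrans S I O)}
    (h : TRunTo M s t0 α trs sf) {β : List (I × Guard)} (hβ : Projects M t0 α β) :
    FRunTo (regionFSM M) s β (absOut trs) sf := by
  induction h generalizing β with
  | nil s t0 => cases hβ; exact .nil _
  | @cons s sf t0 t i tr rest trs htr hs hi hg _ ih =>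
    cases hβ with
    | @cons _ _ _ g _ brest hgr hgm hrest =>
      subst hi
      exact FRunTo.cons (f := ⟨s, (tr.inp, g), (tr.out, tr.delay), tr.dst⟩)
        ⟨hgr, tr, htr, hs, rfl, rfl, rfl, rfl, guardSub_of_mem M hho htr hgr hg hgm⟩
        rfl rfl (ih hrest)

lemma exists_tRunTo_of_fRunTo (M : TFSM S I O)
    {t0 : ℝ} {α : List (I × ℝ)} {β : List (I × Guard)} (hβ : Projects M t0 α β)
    {s sf : S} {γ : List (O × ℕ+)} (h : FRunTo (regionFSM M) s β γ sf) :
    ∃ trs, TRunTo M s t0 α trs sf ∧ absOut trs = γ := by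
  induction hβ generalizing s γ with
  | nil t0 => cases h; exact ⟨[], .nil _ _, rfl⟩
  | cons _ hgm _ ih =>
    cases h with
    | @cons _ _ _ _ γ f hf hs ha hrun =>
      obtain ⟨-, tr, htr, h1, h2, h3, h4, h5, h6⟩ := hf
      obtain ⟨trs, hr, rfl⟩ := ih hrun
      rw [ha] at h2 h6
      refine ⟨tr :: trs, .cons htr (h1.trans hs) h2 (h6 _ hgm) (h5 ▸ hr), ?_⟩
      simp [absOut, h3, h4]

lemma rawOutputs_eq_absOut (α : List (I × ℝ)) (trs : List (TTrans S I O)) :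
    rawOutputs α trs =
      List.zipWith (fun p q => (q.1, p.2 + ((q.2 : ℕ) : ℝ))) α (absOut trs) := by
  simp [rawOutputs, absOut, List.zipWith_map_right]

lemma timedOut_subset (M : TFSM S I O) (hho : HalfOpenGuards M)
    {α : List (I × ℝ)} {β : List (I × Guard)} (hβ : Projects M 0 α β) {s1 s2 : S}
    (h : FOut (regionFSM M) s1 β ⊆ FOut (regionFSM M) s2 β) :
    timedOut M s1 α ⊆ timedOut M s2 α := by
  rintro b ⟨trs, sf, hrun, hperm, hsort⟩
  obtain ⟨sf', hf⟩ := h ⟨sf, fRunTo_of_tRunTo M hho hrun hβ⟩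
  obtain ⟨trs', hrun', heq⟩ := exists_tRunTo_of_fRunTo M hβ hf
  refine ⟨trs', sf', hrun', ?_, hsort⟩
  rwa [rawOutputs_eq_absOut, heq, ← rawOutputs_eq_absOut]

/-- for a weakly-complete deterministic TFSM with half-open guards, if `α`
is a homing sequence for the TFSM, then its untimed projection `[α]_{I_G}` (which is
then defined) is a homing sequence for the region FSM. -/
theorem stmt9 {S I O : Type} [Fintype S] [Nonempty S] [Fintype I] [Nonempty I]
    [Fintype O] [Nonempty O]
    (M : TFSM S I O) (hfin : Set.Finite M) (hdet : TFSMDeterministic M)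
    (hwc : WeaklyComplete M) (hho : HalfOpenGuards M)
    (α : List (I × ℝ)) (hhom : THoming M α) :
    (∃ β, Projects M 0 α β) ∧
    (∀ β, Projects M 0 α β → FHoming (regionFSM M) β) := by
  constructor
  · obtain ⟨s⟩ := ‹Nonempty S›
    obtain ⟨sf, ⟨trs, hrun⟩, -⟩ := hhom.2 s s rfl
    exact exists_projects M hfin hho hrun
  · intro β hβ s1 s2 h
    obtain ⟨sf, ⟨trs1, h1⟩, ⟨trs2, h2⟩⟩ := hhom.2 s1 s2
      ((timedOut_subset M hho hβ h.subset).antisymm (timedOut_subset M hho hβ h.superset))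
    exact ⟨sf, ⟨_, fRunTo_of_tRunTo M hho h1 hβ⟩, ⟨_, fRunTo_of_tRunTo M hho h2 hβ⟩⟩
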